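/- For all quaternions w, z in the open unit ball 𝔹, δ(w,z) equals the modulus of the regular Möbius transformation associated with w evaluated at z, and also the modulus of the regular Möbius transformation associated with z evaluated at w. Concretely: δ(w,z) = ‖(1 − ẑ·conj(w))⁻¹ (ẑ − w)‖ where ẑ = (1 − zw)⁻¹ z (1 − zw), and likewise δ(w,z) = ‖(1 − ŵ·conj(z))⁻¹ (ŵ − z)‖ where ŵ = (1 − wz)⁻¹ w (1 − wz). (Here 1 − zw, 1 − ẑ·conj(w), 1 − wz, 1 − ŵ·conj(z) are all invertible since ‖z‖‖w‖ < 1.) -/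

import Mathlib

noncomputable section

local notation "ℍ" => Quaternion ℝ

/-- The distance between the normalized reproducing kernels of the quaternionic Hardy
space `H²(𝔹)` at the points `w, z` of the unit ball. -/
def hardyDelta (w z : ℍ) : ℝ :=
  Real.sqrt (1 - (1 - ‖w‖ ^ 2) * (1 - ‖z‖ ^ 2) * ‖∑' n : ℕ, z ^ n * (star w) ^ n‖ ^ 2)

/-! The kernel sum `S = ∑ zⁿ w̄ⁿ` solves `S - z S w̄ = 1`. The real numbers `w + w̄` and `w w̄`
commute with `S`, so this equation turns into `(1 - z (w + w̄) + z² w w̄) S = 1 - z w`. The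
quadratic factor splits as `(1 - z w) (1 - ẑ w̄)`, and cancelling `1 - z w` gives
`S = (1 - ẑ w̄)⁻¹`. As `‖ẑ‖ = ‖z‖`, the classical identity
`‖x - w‖² = ‖1 - x w̄‖² - (1 - ‖w‖²) (1 - ‖x‖²)` at `x = ẑ` gives the first formula, and the second
one follows because `δ` is symmetric. -/

theorem summable_pow_mul_pow {R : Type*} [NormedRing R] [CompleteSpace R] {a b : R}
    (h : ‖a‖ * ‖b‖ < 1) : Summable fun n : ℕ => a ^ n * b ^ n := by
  have hgeom : Summable fun n : ℕ => (‖a‖ * ‖b‖) ^ (n + 1) :=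
    (summable_nat_add_iff 1).mpr (summable_geometric_of_lt_one (by positivity) h)
  refine (summable_nat_add_iff 1).mp (hgeom.of_norm_bounded fun n => ?_)
  calc ‖a ^ (n + 1) * b ^ (n + 1)‖
      ≤ ‖a ^ (n + 1)‖ * ‖b ^ (n + 1)‖ := norm_mul_le _ _
    _ ≤ ‖a‖ ^ (n + 1) * ‖b‖ ^ (n + 1) := by
      gcongr <;> exact norm_pow_le' _ n.succ_pos
    _ = (‖a‖ * ‖b‖) ^ (n + 1) := (mul_pow _ _ _).symm

theorem tsum_pow_mul_pow_sub_mul_mul {R : Type*} [Ring R] [TopologicalSpace R]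
    [IsTopologicalRing R] [T2Space R] {a b : R} (h : Summable fun n : ℕ => a ^ n * b ^ n) :
    ∑' n : ℕ, a ^ n * b ^ n - a * (∑' n : ℕ, a ^ n * b ^ n) * b = 1 := by
  rw [sub_eq_iff_eq_add]
  calc ∑' n : ℕ, a ^ n * b ^ n
      = 1 + ∑' n : ℕ, a ^ (n + 1) * b ^ (n + 1) := by
        rw [h.tsum_eq_zero_add, pow_zero, pow_zero, mul_one]
    _ = 1 + ∑' n : ℕ, a * (a ^ n * b ^ n) * b := by
        simp only [pow_succ' a, pow_succ b, mul_assoc]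
    _ = 1 + a * (∑' n : ℕ, a ^ n * b ^ n) * b := by
        rw [(h.mul_left a).tsum_mul_right, h.tsum_mul_left]

section QuaternionIdentities

variable {R : Type*} [CommRing R]

theorem quadratic_mul_eq_one_sub_mul_of_sub_eq_one {w z S : Quaternion R}
    (hS : S - z * S * star w = 1) :
    (1 - z * (w + star w) + z * z * (w * star w)) * S = 1 - z * w := by
  have trace_comm : (w + star w) * S = S * (w + star w) := by
    rw [Quaternion.self_add_star']
    exact Quaternion.coe_commutes _ _
  have norm_comm : w * star w * S = S * (star w * w) := by
    rw [Quaternion.self_mul_star, Quaternion.star_mul_self]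
    exact Quaternion.coe_commutes _ _
  calc (1 - z * (w + star w) + z * z * (w * star w)) * S
      = S - z * ((w + star w) * S) + z * z * (w * star w * S) := by noncomm_ring
    _ = (S - z * S * star w) - z * (S - z * S * star w) * w := by
        rw [trace_comm, norm_comm]
        noncomm_ring
    _ = 1 - z * w := by rw [hS, mul_one]

theorem normSq_sub_eq (a b : Quaternion R) :
    Quaternion.normSq (a - b) =
      Quaternion.normSq a + Quaternion.normSq b - 2 * (a * star b).re := by
  rw [sub_eq_add_neg, Quaternion.normSq_add, Quaternion.normSq_neg, star_neg, mul_neg,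
    Quaternion.re_neg, mul_neg, ← sub_eq_add_neg]

theorem normSq_sub_eq_normSq_one_sub_mul_star_sub (x w : Quaternion R) :
    Quaternion.normSq (x - w) = Quaternion.normSq (1 - x * star w) -
      (1 - Quaternion.normSq w) * (1 - Quaternion.normSq x) := by
  rw [normSq_sub_eq, normSq_sub_eq, one_mul, Quaternion.re_star, map_mul, map_one,
    Quaternion.normSq_star]
  ring

end QuaternionIdentities

/-- The point `ẑ = (1 - z w)⁻¹ z (1 - z w)` at which the ordinary quotient has to be evaluated so
as to obtain the value at `z` of the regular Möbius transformation associated with `w`. It is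
meaningful only when `1 - z * w ≠ 0`; otherwise it is `0`. -/
def moebiusConj {K : Type*} [DivisionRing K] (w z : K) : K :=
  (1 - z * w)⁻¹ * z * (1 - z * w)

/-- The regular Möbius transformation associated with `w`, evaluated at `z`. The regular quotient
`(1 - q w̄)^{-*} * (q - w)` is encoded by its pointwise expression `(1 - ẑ w̄)⁻¹ (ẑ - w)`. -/
def regularMoebius {K : Type*} [DivisionRing K] [Star K] (w z : K) : K :=
  (1 - moebiusConj w z * star w)⁻¹ * (moebiusConj w z - w)

theorem one_sub_mul_ne_zero_of_norm_mul_norm_lt_one {R : Type*} [NormedRing R] [Nontrivial R]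
    {a b : R} (h : ‖a‖ * ‖b‖ < 1) : 1 - a * b ≠ 0 := by
  intro hzero
  have hnorm : 1 ≤ ‖a * b‖ := sub_eq_zero.mp hzero ▸ one_le_norm_one R
  exact (hnorm.trans (norm_mul_le a b)).not_gt h

theorem norm_moebiusConj {K : Type*} [NormedDivisionRing K] {w z : K} (h : 1 - z * w ≠ 0) :
    ‖moebiusConj w z‖ = ‖z‖ := by
  rw [moebiusConj, norm_mul, norm_mul, norm_inv, mul_comm _ ‖z‖,
    inv_mul_cancel_right₀ (norm_ne_zero_iff.mpr h)]

theorem one_sub_mul_mul_one_sub_moebiusConj_mul {K : Type*} [DivisionRing K] {w z : K}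
    (h : 1 - z * w ≠ 0) (v : K) :
    (1 - z * w) * (1 - moebiusConj w z * v) = 1 - z * (w + v) + z * z * (w * v) := by
  have hconj : (1 - z * w) * moebiusConj w z = z * (1 - z * w) := by
    rw [moebiusConj, mul_assoc, mul_inv_cancel_left₀ h]
  rw [mul_sub, ← mul_assoc, hconj]
  noncomm_ring

theorem tsum_pow_mul_star_pow_eq_inv {w z : ℍ} (h : ‖z‖ * ‖w‖ < 1) :
    ∑' n : ℕ, z ^ n * star w ^ n = (1 - moebiusConj w z * star w)⁻¹ := by
  have hzw : 1 - z * w ≠ 0 := one_sub_mul_ne_zero_of_norm_mul_norm_lt_one h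
  have hS := tsum_pow_mul_pow_sub_mul_mul
    (summable_pow_mul_pow (a := z) (b := star w) (by rwa [norm_star]))
  refine eq_inv_of_mul_eq_one_right (mul_left_cancel₀ hzw ?_)
  rw [← mul_assoc, one_sub_mul_mul_one_sub_moebiusConj_mul hzw,
    quadratic_mul_eq_one_sub_mul_of_sub_eq_one hS, mul_one]

theorem norm_inv_mul_sub_sq {x w : ℍ} (h : 1 - x * star w ≠ 0) :
    ‖(1 - x * star w)⁻¹ * (x - w)‖ ^ 2 =
      1 - (1 - ‖w‖ ^ 2) * (1 - ‖x‖ ^ 2) * ‖(1 - x * star w)⁻¹‖ ^ 2 := by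
  have hnorm : ‖1 - x * star w‖ ≠ 0 := norm_ne_zero_iff.mpr h
  have hsub : ‖x - w‖ ^ 2 = ‖1 - x * star w‖ ^ 2 - (1 - ‖w‖ ^ 2) * (1 - ‖x‖ ^ 2) := by
    simpa only [Quaternion.normSq_eq_norm_mul_self, ← pow_two] using
      normSq_sub_eq_normSq_one_sub_mul_star_sub x w
  rw [norm_mul, mul_pow, hsub, norm_inv]
  field_simp

theorem hardyDelta_comm (w z : ℍ) : hardyDelta w z = hardyDelta z w := by
  have hkernel : ‖∑' n : ℕ, z ^ n * star w ^ n‖ = ‖∑' n : ℕ, w ^ n * star z ^ n‖ := by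
    rw [← norm_star, tsum_star]
    simp only [star_mul, star_pow, star_star]
  rw [hardyDelta, hardyDelta, hkernel, mul_comm (1 - ‖w‖ ^ 2)]

theorem hardyDelta_eq_norm_regularMoebius {w z : ℍ} (h : ‖w‖ * ‖z‖ < 1) :
    hardyDelta w z = ‖regularMoebius w z‖ := by
  have hzw : ‖z‖ * ‖w‖ < 1 := by rwa [mul_comm]
  have hconj : ‖moebiusConj w z‖ = ‖z‖ :=
    norm_moebiusConj (one_sub_mul_ne_zero_of_norm_mul_norm_lt_one hzw)
  have hden : 1 - moebiusConj w z * star w ≠ 0 :=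
    one_sub_mul_ne_zero_of_norm_mul_norm_lt_one (by rwa [hconj, norm_star])
  rw [hardyDelta, tsum_pow_mul_star_pow_eq_inv hzw, ← hconj, ← norm_inv_mul_sub_sq hden,
    Real.sqrt_sq (norm_nonneg _), regularMoebius]

theorem hardyDelta_eq_regular_moebius_general (w z : ℍ) (h : ‖w‖ * ‖z‖ < 1) :
    hardyDelta w z = ‖regularMoebius w z‖ ∧ hardyDelta w z = ‖regularMoebius z w‖ :=
  ⟨hardyDelta_eq_norm_regularMoebius h,
    (hardyDelta_comm w z).trans (hardyDelta_eq_norm_regularMoebius (by rwa [mul_comm]))⟩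

/-- For `w, z` in the quaternionic unit ball, `δ(w,z)` equals the modulus of the regular
Möbius transformation associated with `w` evaluated at `z`, and also the modulus of the
regular Möbius transformation associated with `z` evaluated at `w`:
`δ(w,z) = ‖(1 − ẑ·conj(w))⁻¹ (ẑ − w)‖` with `ẑ = (1 − zw)⁻¹ z (1 − zw)`, and
`δ(w,z) = ‖(1 − ŵ·conj(z))⁻¹ (ŵ − z)‖` with `ŵ = (1 − wz)⁻¹ w (1 − wz)`. -/
theorem hardyDelta_eq_regular_moebius (w z : ℍ) (hw : ‖w‖ < 1) (hz : ‖z‖ < 1) :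
    (hardyDelta w z =
      ‖(1 - ((1 - z * w)⁻¹ * z * (1 - z * w)) * star w)⁻¹ *
        (((1 - z * w)⁻¹ * z * (1 - z * w)) - w)‖) ∧
    (hardyDelta w z =
      ‖(1 - ((1 - w * z)⁻¹ * w * (1 - w * z)) * star z)⁻¹ *
        (((1 - w * z)⁻¹ * w * (1 - w * z)) - z)‖) :=
  hardyDelta_eq_regular_moebius_general w z
    (mul_lt_one_of_nonneg_of_lt_one_left (norm_nonneg w) hw hz.le)
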